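/- For fixed t > 1, let 𝓛₁ and 𝓛₂ be two sets of t lines in the plane and P₀ = {ℓ₁ ∩ ℓ₂ : ℓ₁ ∈ 𝓛₁, ℓ₂ ∈ 𝓛₂} with |P₀| = t². Then there is a constant c = c(t) such that any arrangement of m points and n lines in the plane whose incidence graph contains no subconfiguration isomorphic to (P₀, 𝓛₁ ∪ 𝓛₂) has at most c(m^{(2t−2)/(3t−2)} n^{(2t−1)/(3t−2)} + m^{1 + 1/(6t−3)} + n) incidences. -/

import Mathlib

/-- The point `p` lies on the (non-vertical) line `l = (slope, intercept)`. -/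
def PtOnLine (p l : ℝ × ℝ) : Prop := p.2 = l.1 * p.1 + l.2

/-- `(P, L)` contains a subconfiguration isomorphic to `(P₀, L₀)`: there are injections
of the points and of the lines preserving incidences and non-incidences. -/
def ContainsConfig (P L P₀ L₀ : Finset (ℝ × ℝ)) : Prop :=
  ∃ f g : ℝ × ℝ → ℝ × ℝ,
    Set.InjOn f ↑P₀ ∧ Set.InjOn g ↑L₀ ∧
    (∀ p ∈ P₀, f p ∈ P) ∧ (∀ l ∈ L₀, g l ∈ L) ∧
    ∀ p ∈ P₀, ∀ l ∈ L₀, (PtOnLine p l ↔ PtOnLine (f p) (g l))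


noncomputable section GridProof
open Finset
open scoped Classical

theorem line_unique {p p' l l' : ℝ × ℝ} (hp : p ≠ p') (h1 : PtOnLine p l) (h2 : PtOnLine p' l)
    (h3 : PtOnLine p l') (h4 : PtOnLine p' l') : l = l' := by
  unfold PtOnLine at *
  have hx : p.1 - p'.1 ≠ 0 := by
    intro h
    apply hp
    have : p.1 = p'.1 := by linarith
    apply Prod.ext this
    rw [h1, h2, this]
  have : (l.1 - l'.1) * (p.1 - p'.1) = 0 := by linear_combination h3 - h1 + h2 - h4
  have h5 : l.1 = l'.1 := by
    rcases mul_eq_zero.1 this with h | h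
    · linarith
    · exact absurd h hx
  apply Prod.ext h5
  rw [h5] at h1
  linarith

theorem pt_unique {p p' l l' : ℝ × ℝ} (hl : l ≠ l') (h1 : PtOnLine p l) (h2 : PtOnLine p' l)
    (h3 : PtOnLine p l') (h4 : PtOnLine p' l') : p = p' := by
  by_contra h
  exact hl (line_unique h h1 h2 h3 h4)

def inc (P L : Finset (ℝ × ℝ)) : ℕ := ((P ×ˢ L).filter fun q => PtOnLine q.1 q.2).card

def deg (P : Finset (ℝ × ℝ)) (l : ℝ × ℝ) : ℕ := (P.filter fun p => PtOnLine p l).card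

theorem inc_eq_lines (P L : Finset (ℝ × ℝ)) : inc P L = ∑ l ∈ L, deg P l := by
  unfold inc deg
  simp only [card_filter]
  rw [sum_product_right]

theorem inc_eq_points (P L : Finset (ℝ × ℝ)) :
    inc P L = ∑ p ∈ P, (L.filter fun l => PtOnLine p l).card := by
  unfold inc
  simp only [card_filter]
  rw [sum_product]

theorem pairs_bound (P L : Finset (ℝ × ℝ)) :
    ∑ l ∈ L, (deg P l * deg P l - deg P l) ≤ P.card ^ 2 := by
  have h : ∀ l ∈ L, deg P l * deg P l - deg P l =
      (P.filter fun p => PtOnLine p l).offDiag.card := by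
    intro l _
    rw [offDiag_card]; rfl
  rw [sum_congr rfl h, ← card_biUnion]
  · calc _ ≤ (P ×ˢ P).card := by
          apply card_le_card
          intro x hx
          simp only [mem_biUnion, mem_offDiag, mem_filter, mem_product] at *
          obtain ⟨l, _, h1, h2, _⟩ := hx
          exact ⟨h1.1, h2.1⟩
      _ = _ := by rw [card_product, sq]
  · intro l _ l' _ hne
    rw [Function.onFun, Finset.disjoint_left]
    intro x hx hx'
    simp only [mem_offDiag, mem_filter] at hx hx'
    exact hne (line_unique hx.2.2 hx.1.2 hx.2.1.2 hx'.1.2 hx'.2.1.2)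

theorem inc_le_trivial (P L : Finset (ℝ × ℝ)) : inc P L ≤ L.card + P.card ^ 2 := by
  rw [inc_eq_lines]
  calc _ ≤ ∑ l ∈ L, (1 + (deg P l * deg P l - deg P l)) := by
        apply sum_le_sum
        intro l _
        generalize deg P l = d
        rcases d with _ | d
        · simp
        · have : (d+1)*(d+1) - (d+1) = d * (d+1) := by
            rw [Nat.sub_eq_iff_eq_add (by nlinarith)]; ring
          rw [this]; nlinarith
    _ ≤ _ := by
        rw [sum_add_distrib]
        have := pairs_bound P L
        simp only [sum_const, smul_eq_mul, mul_one]
        omega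

theorem heavy_bound (P L : Finset (ℝ × ℝ)) (q : ℕ) :
    q * ∑ l ∈ L.filter (fun l => q < deg P l), deg P l ≤ P.card ^ 2 := by
  rw [mul_sum]
  calc _ ≤ ∑ l ∈ L.filter (fun l => q < deg P l), (deg P l * deg P l - deg P l) := by
        apply sum_le_sum
        intro l hl
        have := (mem_filter.1 hl).2
        generalize deg P l = d at *
        apply Nat.le_sub_of_add_le
        nlinarith
    _ ≤ _ := pairs_bound _ _

theorem kst {α : Type*} (t T : ℕ) (ht : 1 ≤ t) (C : Finset α) (E : α → α → Prop)
    (h : ∀ A ⊆ C, A.card = t → (C.filter fun b => ∀ a ∈ A, E a b).card ≤ T) :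
    (((C ×ˢ C).filter fun x => E x.1 x.2).card : ℝ) ≤
      ((T : ℝ) + t) * (C.card : ℝ) ^ ((2 : ℝ) - 1 / t) := by
  rcases C.eq_empty_or_nonempty with rfl | hC
  · simp only [product_empty, filter_empty, card_empty, Nat.cast_zero]
    positivity
  have hc : 1 ≤ C.card := hC.card_pos
  set c := C.card with hcdef
  set D : α → ℕ := fun b => (C.filter fun a => E a b).card with hD
  have hE : ((C ×ˢ C).filter fun x => E x.1 x.2).card = ∑ b ∈ C, D b := by
    simp only [hD, card_filter]
    rw [sum_product_right]
  set S := ∑ b ∈ C, (D b + 1 - t) with hS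
  have hES : ((C ×ˢ C).filter fun x => E x.1 x.2).card ≤ S + t * c := by
    rw [hE, hS]
    calc _ ≤ ∑ b ∈ C, ((D b + 1 - t) + t) := sum_le_sum (fun b _ => by omega)
      _ = _ := by rw [sum_add_distrib]; simp [hcdef, mul_comm]
  have h1 : ∑ b ∈ C, (D b).descFactorial t ≤ c ^ t * T := by
    calc _ = t.factorial * ∑ b ∈ C, (powersetCard t (C.filter fun a => E a b)).card := by
          rw [mul_sum]
          apply sum_congr rfl
          intro b _
          rw [card_powersetCard, Nat.descFactorial_eq_factorial_mul_choose]
      _ = t.factorial * ∑ A ∈ powersetCard t C, (C.filter fun b => ∀ a ∈ A, E a b).card := by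
          congr 1
          have : ∀ b ∈ C, (powersetCard t (C.filter fun a => E a b)).card =
              ((powersetCard t C).filter fun A => ∀ a ∈ A, E a b).card := by
            intro b _
            congr 1
            ext A
            simp only [mem_powersetCard, mem_filter, subset_iff]
            constructor
            · rintro ⟨h1, h2⟩
              exact ⟨⟨fun x hx => (h1 hx).1, h2⟩, fun x hx => (h1 hx).2⟩
            · rintro ⟨⟨h1, h2⟩, h3⟩
              exact ⟨fun x hx => ⟨h1 hx, h3 x hx⟩, h2⟩
          rw [sum_congr rfl this]
          simp only [card_filter]
          rw [sum_comm]
      _ ≤ t.factorial * ∑ A ∈ powersetCard t C, T := by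
          gcongr with A hA
          rw [mem_powersetCard] at hA
          exact h A hA.1 hA.2
      _ = c.descFactorial t * T := by
          rw [sum_const, card_powersetCard, Nat.descFactorial_eq_factorial_mul_choose, smul_eq_mul,
            mul_assoc]
      _ ≤ _ := by gcongr; exact Nat.descFactorial_le_pow _ _
  have h2 : ∑ b ∈ C, (D b + 1 - t) ^ t ≤ c ^ t * T :=
    (sum_le_sum fun b _ => Nat.pow_sub_le_descFactorial (D b) t).trans h1
  have h3 : (S : ℝ) ^ t ≤ (c : ℝ) ^ (t - 1) * (c ^ t * T) := by
    obtain ⟨n, rfl⟩ : ∃ n, t = n + 1 := ⟨t - 1, by omega⟩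
    have := pow_sum_div_card_le_sum_pow (s := C) (f := fun b => ((D b + 1 - (n+1) : ℕ) : ℝ))
      (fun _ _ => by positivity) n
    rw [div_le_iff₀ (by positivity)] at this
    have h2' : (∑ b ∈ C, ((D b + 1 - (n+1) : ℕ) : ℝ) ^ (n+1)) ≤ c ^ (n+1) * T := by exact_mod_cast h2
    rw [hS, Nat.add_sub_cancel]
    rw [Nat.cast_sum]
    calc _ ≤ _ := this
      _ ≤ (c ^ (n+1) * T) * (C.card : ℝ) ^ n := by gcongr
      _ = _ := by rw [mul_comm]
  have hc' : (1 : ℝ) ≤ c := by exact_mod_cast hc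
  have ht' : (1 : ℝ) ≤ t := by exact_mod_cast ht
  have h4 : (S : ℝ) ≤ T * (c : ℝ) ^ ((2 : ℝ) - 1 / t) := by
    refine le_of_pow_le_pow_left₀ (n := t) (by omega) (by positivity) (h3.trans ?_)
    rw [mul_pow, ← Real.rpow_mul_natCast (by positivity)]
    have : ((2 : ℝ) - 1 / t) * t = ((t - 1 + t : ℕ) : ℝ) := by
      rw [Nat.cast_add, Nat.cast_sub ht]
      field_simp
      push_cast
      ring
    rw [this, Real.rpow_natCast, ← mul_assoc, ← pow_add, mul_comm]
    gcongr
    exact_mod_cast Nat.le_self_pow (by omega) T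
  have h5 : (c : ℝ) ≤ (c : ℝ) ^ ((2 : ℝ) - 1 / t) := by
    conv_lhs => rw [← Real.rpow_one (c : ℝ)]
    apply Real.rpow_le_rpow_of_exponent_le hc'
    have : 1 / (t : ℝ) ≤ 1 := by rw [div_le_one (by positivity)]; exact ht'
    linarith
  have h6 : (((C ×ˢ C).filter fun x => E x.1 x.2).card : ℝ) ≤ S + t * c := by exact_mod_cast hES
  calc _ ≤ _ := h6
    _ ≤ T * (c : ℝ) ^ ((2 : ℝ) - 1 / t) + t * (c : ℝ) ^ ((2 : ℝ) - 1 / t) := by gcongr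
    _ = _ := by ring

theorem greedy {α : Type*} (R : α → α → Prop) (hR : ∀ x y, R x y → R y x) (D t : ℕ) :
    ∀ B : Finset α, (∀ b ∈ B, (B.filter fun b' => R b b').card ≤ D) → t * (D + 1) ≤ B.card →
    ∃ B' ⊆ B, B'.card = t ∧ ∀ x ∈ B', ∀ y ∈ B', x ≠ y → ¬ R x y := by
  induction t with
  | zero => intro B _ _; exact ⟨∅, by simp⟩
  | succ t ih =>
    intro B hB hcard
    have hne : B.Nonempty := by
      rw [← card_pos]; nlinarith
    obtain ⟨b, hb⟩ := hne
    set B1 := (B.erase b) \ (B.filter fun b' => R b b') with hB1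
    have hB1s : B1 ⊆ B := sdiff_subset.trans (erase_subset _ _)
    have hc1 : t * (D + 1) ≤ B1.card := by
      have := le_card_sdiff (B.filter fun b' => R b b') (B.erase b)
      have h2 := hB b hb
      rw [card_erase_of_mem hb, ← hB1] at this
      have h3 : (t + 1) * (D + 1) = t * (D + 1) + D + 1 := by ring
      omega
    obtain ⟨B', hs, hc, hp⟩ := ih B1
      (fun x hx => (card_le_card (filter_subset_filter _ hB1s)).trans (hB x (hB1s hx))) hc1
    have hbB' : b ∉ B' := by
      intro h
      have := hs h
      simp [hB1] at this
    have hnb : ∀ x ∈ B', ¬ R b x := by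
      intro x hx h
      have := hs hx
      rw [hB1, mem_sdiff, mem_filter] at this
      exact this.2 ⟨hB1s (hs hx), h⟩
    refine ⟨insert b B', insert_subset hb (hs.trans hB1s), by rw [card_insert_of_notMem hbB', hc], ?_⟩
    intro x hx y hy hxy
    rw [mem_insert] at hx hy
    rcases hx with rfl | hx <;> rcases hy with rfl | hy
    · exact absurd rfl hxy
    · exact hnb y hy
    · exact fun h => hnb x hx (hR _ _ h)
    · exact hp x hx y hy hxy

/-- Consecutive lines (by slope) of `C` through a point of `H`. -/
def Edge (H C : Finset (ℝ × ℝ)) (a b : ℝ × ℝ) : Prop :=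
  ∃ p ∈ H, PtOnLine p a ∧ PtOnLine p b ∧ a.1 < b.1 ∧
    ∀ c ∈ C, PtOnLine p c → ¬ (a.1 < c.1 ∧ c.1 < b.1)

theorem slope_inj {p a b : ℝ × ℝ} (h1 : PtOnLine p a) (h2 : PtOnLine p b) (h : a.1 = b.1) :
    a = b := by
  apply Prod.ext h
  unfold PtOnLine at *
  rw [h] at h1
  linarith

theorem inc_le_edges (H C : Finset (ℝ × ℝ)) :
    inc H C ≤ H.card + ((C ×ˢ C).filter fun x => Edge H C x.1 x.2).card := by
  -- next line
  have hnext : ∀ p a : ℝ × ℝ, ∃ b : ℝ × ℝ, (p ∈ H ∧ PtOnLine p a ∧ ∃ c ∈ C, PtOnLine p c ∧ a.1 < c.1) →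
      b ∈ C ∧ PtOnLine p b ∧ a.1 < b.1 ∧ ∀ c ∈ C, PtOnLine p c → ¬ (a.1 < c.1 ∧ c.1 < b.1) := by
    intro p a
    by_cases h : (p ∈ H ∧ PtOnLine p a ∧ ∃ c ∈ C, PtOnLine p c ∧ a.1 < c.1)
    · obtain ⟨_, _, c, hc, hpc, hac⟩ := h
      obtain ⟨b, hb, hmin⟩ := exists_min_image (C.filter fun c => PtOnLine p c ∧ a.1 < c.1)
        (fun c => c.1) ⟨c, by simp [hc, hpc, hac]⟩
      rw [mem_filter] at hb
      refine ⟨b, fun _ => ⟨hb.1, hb.2.1, hb.2.2, ?_⟩⟩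
      rintro c hc hpc ⟨h1, h2⟩
      have := hmin c (by simp [hc, hpc, h1])
      linarith
    · exact ⟨0, fun h' => absurd h' h⟩
  choose nx hnx using hnext
  set Z := (H ×ˢ C).filter fun x => PtOnLine x.1 x.2 ∧ ∃ c ∈ C, PtOnLine x.1 c ∧ x.2.1 < c.1 with hZ
  set Y := (H ×ˢ C).filter fun x => PtOnLine x.1 x.2 ∧ ¬ ∃ c ∈ C, PtOnLine x.1 c ∧ x.2.1 < c.1 with hY
  have h1 : inc H C ≤ Y.card + Z.card := by
    unfold inc
    refine le_trans (card_le_card ?_) (card_union_le _ _)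
    intro x hx
    rw [mem_union, hY, hZ, mem_filter, mem_filter]
    rw [mem_filter] at hx
    by_cases h : ∃ c ∈ C, PtOnLine x.1 c ∧ x.2.1 < c.1
    · exact Or.inr ⟨hx.1, hx.2, h⟩
    · exact Or.inl ⟨hx.1, hx.2, h⟩
  have h2 : Y.card ≤ H.card := by
    apply card_le_card_of_injOn Prod.fst
    · intro x hx
      rw [mem_coe, hY, mem_filter, mem_product] at hx
      exact hx.1.1
    · intro x hx y hy hxy
      rw [mem_coe, hY, mem_filter, mem_product] at hx hy
      apply Prod.ext hxy
      have hx3 := hx.2.2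
      have hy3 := hy.2.2
      push Not at hx3 hy3
      apply slope_inj hx.2.1 (hxy ▸ hy.2.1)
      exact le_antisymm (hy3 _ hx.1.2 (hxy ▸ hx.2.1)) (hx3 _ hy.1.2 (hxy ▸ hy.2.1))
  have h3 : Z.card ≤ ((C ×ˢ C).filter fun x => Edge H C x.1 x.2).card := by
    have key : ∀ x ∈ Z, nx x.1 x.2 ∈ C ∧ PtOnLine x.1 (nx x.1 x.2) ∧ x.2.1 < (nx x.1 x.2).1 ∧
        ∀ c ∈ C, PtOnLine x.1 c → ¬ (x.2.1 < c.1 ∧ c.1 < (nx x.1 x.2).1) := by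
      intro x hx
      rw [hZ, mem_filter, mem_product] at hx
      exact hnx x.1 x.2 ⟨hx.1.1, hx.2.1, hx.2.2⟩
    apply card_le_card_of_injOn (fun x => (x.2, nx x.1 x.2))
    · intro x hx
      have k := key x hx
      rw [mem_coe, hZ, mem_filter, mem_product] at hx
      rw [mem_coe, mem_filter, mem_product]
      exact ⟨⟨hx.1.2, k.1⟩, x.1, hx.1.1, hx.2.1, k.2⟩
    · intro x hx y hy hxy
      have kx := key x hx
      have ky := key y hy
      rw [mem_coe, hZ, mem_filter, mem_product] at hx hy
      rw [Prod.mk.injEq] at hxy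
      refine Prod.ext ?_ hxy.1
      have hne : x.2 ≠ nx x.1 x.2 := fun h => absurd (congrArg Prod.fst h) kx.2.2.1.ne
      refine pt_unique hne hx.2.1 ?_ kx.2.1 ?_
      · rw [hxy.1]; exact hy.2.1
      · rw [hxy.2]; exact ky.2.1
  omega

theorem exists_bijOn_of_card (S T : Finset (ℝ × ℝ)) (h : S.card = T.card) :
    ∃ f : ℝ × ℝ → ℝ × ℝ, Set.BijOn f S T := by
  apply Set.Finite.exists_bijOn_of_encard_eq S.finite_toSet
  rw [Set.encard_coe_eq_coe_finsetCard, Set.encard_coe_eq_coe_finsetCard, h]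

/-- Building the grid configuration. -/
theorem contains_of_grid (t : ℕ) (L₁ L₂ : Finset (ℝ × ℝ))
    (h1 : L₁.card = t) (h2 : L₂.card = t) (hd : Disjoint L₁ L₂)
    (P₀ : Finset (ℝ × ℝ))
    (hP₀ : (↑P₀ : Set (ℝ × ℝ)) =
      {p : ℝ × ℝ | ∃ l₁ ∈ L₁, ∃ l₂ ∈ L₂, PtOnLine p l₁ ∧ PtOnLine p l₂})
    (hcard : P₀.card = t ^ 2) (P L A B : Finset (ℝ × ℝ)) (hA : A.card = t) (hB : B.card = t)
    (hAL : A ⊆ L) (hBL : B ⊆ L) (hAB : Disjoint A B) (X : ℝ × ℝ → ℝ × ℝ → ℝ × ℝ)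
    (hX : ∀ a ∈ A, ∀ b ∈ B, X a b ∈ P ∧ PtOnLine (X a b) a ∧ PtOnLine (X a b) b)
    (hinj : ∀ a ∈ A, ∀ b ∈ B, ∀ a' ∈ A, ∀ b' ∈ B, X a b = X a' b' → a = a' ∧ b = b') :
    ContainsConfig P L P₀ (L₁ ∪ L₂) := by
  have hmem : ∀ p, p ∈ P₀ ↔ ∃ l₁ ∈ L₁, ∃ l₂ ∈ L₂, PtOnLine p l₁ ∧ PtOnLine p l₂ := by
    intro p
    rw [← mem_coe, hP₀]; rfl
  have hne : ∀ l ∈ L₁, ∀ l' ∈ L₂, l ≠ l' := by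
    rintro l hl l' hl' rfl
    exact Finset.disjoint_left.1 hd hl hl'
  have hneAB : ∀ l ∈ A, ∀ l' ∈ B, l ≠ l' := by
    rintro l hl l' hl' rfl
    exact Finset.disjoint_left.1 hAB hl hl'
  have hφ : ∀ p : ℝ × ℝ, ∃ y : (ℝ × ℝ) × (ℝ × ℝ), p ∈ P₀ →
      y.1 ∈ L₁ ∧ y.2 ∈ L₂ ∧ PtOnLine p y.1 ∧ PtOnLine p y.2 := by
    intro p
    by_cases hp : p ∈ P₀
    · obtain ⟨l, hl, l', hl', h3, h4⟩ := (hmem p).1 hp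
      exact ⟨(l, l'), fun _ => ⟨hl, hl', h3, h4⟩⟩
    · exact ⟨0, fun h => absurd h hp⟩
  choose φ hφ using hφ
  have hφinj : Set.InjOn φ P₀ := by
    intro p hp p' hp' h
    have k := hφ p hp
    have k' := hφ p' hp'
    rw [← h] at k'
    exact pt_unique (hne _ k.1 _ k.2.1) k.2.2.1 k'.2.2.1 k.2.2.2 k'.2.2.2
  have himg : P₀.image φ = L₁ ×ˢ L₂ := by
    apply eq_of_subset_of_card_le
    · intro y hy
      obtain ⟨p, hp, rfl⟩ := mem_image.1 hy
      have k := hφ p hp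
      exact mem_product.2 ⟨k.1, k.2.1⟩
    · rw [card_image_of_injOn hφinj, card_product, hcard, h1, h2, sq]
  have hsurj : ∀ l ∈ L₁, ∀ l' ∈ L₂, ∃ p ∈ P₀, φ p = (l, l') := by
    intro l hl l' hl'
    have : (l, l') ∈ P₀.image φ := by rw [himg]; exact mem_product.2 ⟨hl, hl'⟩
    simpa using this
  have hon1 : ∀ p ∈ P₀, ∀ l ∈ L₁, PtOnLine p l → l = (φ p).1 := by
    intro p hp l hl hpl
    have k := hφ p hp
    obtain ⟨p', hp', he⟩ := hsurj l hl _ k.2.1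
    have k' := hφ p' hp'
    rw [he] at k'
    have : p = p' := pt_unique (hne _ hl _ k.2.1) hpl k'.2.2.1 k.2.2.2 k'.2.2.2
    rw [this, he]
  have hon2 : ∀ p ∈ P₀, ∀ l ∈ L₂, PtOnLine p l → l = (φ p).2 := by
    intro p hp l hl hpl
    have k := hφ p hp
    obtain ⟨p', hp', he⟩ := hsurj _ k.1 l hl
    have k' := hφ p' hp'
    rw [he] at k'
    have : p = p' := pt_unique (hne _ k.1 _ hl) k.2.2.1 k'.2.2.1 hpl k'.2.2.2
    rw [this, he]
  obtain ⟨g1, hg1⟩ := exists_bijOn_of_card L₁ A (h1.trans hA.symm)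
  obtain ⟨g2, hg2⟩ := exists_bijOn_of_card L₂ B (h2.trans hB.symm)
  set g : ℝ × ℝ → ℝ × ℝ := fun l => if l ∈ L₁ then g1 l else g2 l with hg
  have hgL1 : ∀ l ∈ L₁, g l = g1 l := fun l hl => by simp [hg, hl]
  have hgL2 : ∀ l ∈ L₂, g l = g2 l := fun l hl => by
    have : l ∉ L₁ := fun h => hne l h l hl rfl
    simp [hg, this]
  have hm1 : ∀ l ∈ L₁, g1 l ∈ A := fun l hl => hg1.1 hl
  have hm2 : ∀ l ∈ L₂, g2 l ∈ B := fun l hl => hg2.1 hl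
  refine ⟨fun p => X (g1 (φ p).1) (g2 (φ p).2), g, ?_, ?_, ?_, ?_, ?_⟩
  · intro p hp p' hp' h
    have k := hφ p hp
    have k' := hφ p' hp'
    obtain ⟨e1, e2⟩ := hinj _ (hm1 _ k.1) _ (hm2 _ k.2.1) _ (hm1 _ k'.1) _ (hm2 _ k'.2.1) h
    exact hφinj hp hp' (Prod.ext (hg1.2.1 k.1 k'.1 e1) (hg2.2.1 k.2.1 k'.2.1 e2))
  · intro l hl l' hl' h
    rw [mem_coe, mem_union] at hl hl'
    rcases hl with hl | hl <;> rcases hl' with hl' | hl'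
    · rw [hgL1 _ hl, hgL1 _ hl'] at h; exact hg1.2.1 hl hl' h
    · rw [hgL1 _ hl, hgL2 _ hl'] at h; exact absurd h (hneAB _ (hm1 _ hl) _ (hm2 _ hl'))
    · rw [hgL2 _ hl, hgL1 _ hl'] at h; exact absurd h.symm (hneAB _ (hm1 _ hl') _ (hm2 _ hl))
    · rw [hgL2 _ hl, hgL2 _ hl'] at h; exact hg2.2.1 hl hl' h
  · intro p hp
    have k := hφ p hp
    exact (hX _ (hm1 _ k.1) _ (hm2 _ k.2.1)).1
  · intro l hl
    rcases mem_union.1 hl with hl | hl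
    · rw [hgL1 _ hl]; exact hAL (hm1 _ hl)
    · rw [hgL2 _ hl]; exact hBL (hm2 _ hl)
  · intro p hp l hl
    have k := hφ p hp
    have x := hX _ (hm1 _ k.1) _ (hm2 _ k.2.1)
    rcases mem_union.1 hl with hl | hl
    · rw [hgL1 _ hl]
      constructor
      · intro h
        rw [hon1 p hp l hl h]; exact x.2.1
      · intro h
        have x' := hX _ (hm1 _ hl) _ (hm2 _ k.2.1)
        have e := pt_unique (hneAB _ (hm1 _ hl) _ (hm2 _ k.2.1)) h x'.2.1 x.2.2 x'.2.2
        have e' := (hinj _ (hm1 _ k.1) _ (hm2 _ k.2.1) _ (hm1 _ hl) _ (hm2 _ k.2.1) e).1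
        rw [← hg1.2.1 k.1 hl e']; exact k.2.2.1
    · rw [hgL2 _ hl]
      constructor
      · intro h
        rw [hon2 p hp l hl h]; exact x.2.2
      · intro h
        have x' := hX _ (hm1 _ k.1) _ (hm2 _ hl)
        have e := pt_unique (hneAB _ (hm1 _ k.1) _ (hm2 _ hl)) x.2.1 x'.2.1 h x'.2.2
        have e' := (hinj _ (hm1 _ k.1) _ (hm2 _ k.2.1) _ (hm1 _ k.1) _ (hm2 _ hl) e).2
        rw [← hg2.2.1 k.2.1 hl e']; exact k.2.2.2

/-- A set of lines spanning no grid with a set of points. -/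
def NoGrid (t : ℕ) (P L : Finset (ℝ × ℝ)) : Prop :=
  ∀ (A B : Finset (ℝ × ℝ)) (X : ℝ × ℝ → ℝ × ℝ → ℝ × ℝ), A.card = t → B.card = t →
    A ⊆ L → B ⊆ L → Disjoint A B →
    (∀ a ∈ A, ∀ b ∈ B, X a b ∈ P ∧ PtOnLine (X a b) a ∧ PtOnLine (X a b) b) →
    ¬ (∀ a ∈ A, ∀ b ∈ B, ∀ a' ∈ A, ∀ b' ∈ B, X a b = X a' b' → a = a' ∧ b = b')

theorem inc_small (t : ℕ) (ht : 1 ≤ t) (P L H C : Finset (ℝ × ℝ)) (hno : NoGrid t P L)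
    (hH : H ⊆ P) (hC : C ⊆ L) :
    (inc H C : ℝ) ≤ H.card + ((t * (t * t + 1) : ℕ) + (t : ℝ)) * (C.card : ℝ) ^ ((2 : ℝ) - 1 / t) := by
  have h1 := inc_le_edges H C
  have h2 := kst t (t * (t * t + 1)) ht C (Edge H C) ?_
  · have h1' : (inc H C : ℝ) ≤ H.card + ((C ×ˢ C).filter fun x => Edge H C x.1 x.2).card := by
      exact_mod_cast h1
    linarith
  intro A hAC hA
  by_contra hcon
  push Not at hcon
  set B := C.filter fun b => ∀ a ∈ A, Edge H C a b with hB
  have hBm : ∀ b ∈ B, b ∈ C ∧ ∀ a ∈ A, Edge H C a b := fun b hb => mem_filter.1 hb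
  -- intersection points
  have hX : ∀ a b : ℝ × ℝ, ∃ p : ℝ × ℝ, Edge H C a b → p ∈ H ∧ PtOnLine p a ∧ PtOnLine p b ∧ a.1 < b.1 ∧
      ∀ c ∈ C, PtOnLine p c → ¬ (a.1 < c.1 ∧ c.1 < b.1) := by
    intro a b
    by_cases h : Edge H C a b
    · obtain ⟨p, hp⟩ := h
      exact ⟨p, fun _ => hp⟩
    · exact ⟨0, fun h' => absurd h' h⟩
  choose X hX using hX
  have uniqb : ∀ a ∈ A, ∀ b ∈ B, ∀ b' ∈ B, X a b = X a b' → b = b' := by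
    intro a ha b hb b' hb' h
    have k := hX a b ((hBm b hb).2 a ha)
    have k' := hX a b' ((hBm b' hb').2 a ha)
    rw [← h] at k'
    apply slope_inj k.2.2.1 k'.2.2.1
    apply le_antisymm
    · by_contra hlt
      push Not at hlt
      exact k.2.2.2.2 b' (hBm b' hb').1 k'.2.2.1 ⟨k'.2.2.2.1, hlt⟩
    · by_contra hlt
      push Not at hlt
      exact k'.2.2.2.2 b (hBm b hb).1 k.2.2.1 ⟨k.2.2.2.1, hlt⟩
  have uniqa : ∀ a ∈ A, ∀ a' ∈ A, ∀ b ∈ B, X a b = X a' b → a = a' := by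
    intro a ha a' ha' b hb h
    have k := hX a b ((hBm b hb).2 a ha)
    have k' := hX a' b ((hBm b hb).2 a' ha')
    rw [← h] at k'
    apply slope_inj k.2.1 k'.2.1
    apply le_antisymm
    · by_contra hlt
      push Not at hlt
      exact k'.2.2.2.2 a (hAC ha) k.2.1 ⟨hlt, k.2.2.2.1⟩
    · by_contra hlt
      push Not at hlt
      exact k.2.2.2.2 a' (hAC ha') k'.2.1 ⟨hlt, k'.2.2.2.1⟩
  have hdeg : ∀ b ∈ B, (B.filter fun b' => ∃ a ∈ A, ∃ a' ∈ A, X a b = X a' b').card ≤ t * t := by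
    intro b hb
    have : (B.filter fun b' => ∃ a ∈ A, ∃ a' ∈ A, X a b = X a' b') ⊆
        (A ×ˢ A).biUnion fun y => B.filter fun b' => X y.1 b = X y.2 b' := by
      intro b' hb'
      rw [mem_filter] at hb'
      obtain ⟨h1, a, ha, a', ha', h⟩ := hb'
      rw [mem_biUnion]
      exact ⟨(a, a'), mem_product.2 ⟨ha, ha'⟩, mem_filter.2 ⟨h1, h⟩⟩
    refine (card_le_card this).trans (card_biUnion_le.trans ?_)
    calc _ ≤ ∑ y ∈ A ×ˢ A, 1 := by
          apply sum_le_sum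
          intro y hy
          rw [mem_product] at hy
          rw [card_le_one]
          intro b1 hb1 b2 hb2
          rw [mem_filter] at hb1 hb2
          exact uniqb y.2 hy.2 b1 hb1.1 b2 hb2.1 (hb1.2.symm.trans hb2.2)
      _ = t * t := by simp [card_product, hA]
  obtain ⟨B', hB's, hB'c, hB'⟩ := greedy
    (fun b b' => ∃ a ∈ A, ∃ a' ∈ A, X a b = X a' b')
    (by rintro x y ⟨a, ha, a', ha', h⟩; exact ⟨a', ha', a, ha, h.symm⟩) (t * t) t B (fun b hb => by convert hdeg b hb) hcon.le
  refine hno A B' X hA hB'c (hAC.trans hC) ((hB's.trans (filter_subset _ _)).trans hC) ?_ ?_ ?_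
  · rw [Finset.disjoint_left]
    intro a ha ha'
    exact absurd (hX a a ((hBm a (hB's ha')).2 a ha)).2.2.2.1 (lt_irrefl _)
  · intro a ha b hb
    have k := hX a b ((hBm b (hB's hb)).2 a ha)
    exact ⟨hH k.1, k.2.1, k.2.2.1⟩
  · intro a ha b hb a' ha' b' hb' h
    have e : b = b' := by
      by_contra hne
      exact hB' b hb b' hb' hne ⟨a, ha, a', ha', h⟩
    subst e
    exact ⟨uniqa a ha a' ha' b (hB's hb) h, rfl⟩

theorem inc_chunk (t : ℕ) (ht : 1 ≤ t) (P L H : Finset (ℝ × ℝ)) (hno : NoGrid t P L)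
    (hH : H ⊆ P) (g : ℕ) (hg : 1 ≤ g) (K : ℝ) (hK : K = (t * (t * t + 1) : ℕ) + (t : ℝ)) :
    ∀ (N : ℕ) (C : Finset (ℝ × ℝ)), C.card ≤ N → C ⊆ L →
    (inc H C : ℝ) ≤ (1 + C.card / g) * (H.card + K * (g : ℝ) ^ ((2 : ℝ) - 1 / t)) := by
  have ht' : (1 : ℝ) ≤ t := by exact_mod_cast ht
  have hK0 : 0 ≤ K := by rw [hK]; positivity
  have he : 0 ≤ (2 : ℝ) - 1 / t := by
    have : 1 / (t : ℝ) ≤ 1 := by rw [div_le_one (by positivity)]; exact ht'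
    linarith
  have hg0 : (0 : ℝ) < g := by exact_mod_cast hg
  intro N
  induction N with
  | zero =>
    intro C hC hCL
    have : C = ∅ := by rw [← card_eq_zero]; omega
    subst this
    have : inc H ∅ = 0 := by simp [inc]
    rw [this, Nat.cast_zero]
    positivity
  | succ N ih =>
    intro C hC hCL
    by_cases hle : C.card ≤ g
    · have h := inc_small t ht P L H C hno hH hCL
      rw [← hK] at h
      have h2 : (C.card : ℝ) ^ ((2 : ℝ) - 1 / t) ≤ (g : ℝ) ^ ((2 : ℝ) - 1 / t) := by
        apply Real.rpow_le_rpow (by positivity) (by exact_mod_cast hle) he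
      calc (inc H C : ℝ) ≤ 1 * (H.card + K * (g : ℝ) ^ ((2 : ℝ) - 1 / t)) := by
            rw [one_mul]; refine h.trans ?_; gcongr
        _ ≤ _ := by
            gcongr
            have : 0 ≤ (C.card : ℝ) / g := by positivity
            linarith
    · push Not at hle
      obtain ⟨C', hC's, hC'c⟩ := exists_subset_card_eq hle.le
      have hsplit : inc H C = inc H C' + inc H (C \ C') := by
        rw [inc_eq_lines, inc_eq_lines, inc_eq_lines, add_comm, sum_sdiff hC's]
      have hc2 : (C \ C').card = C.card - g := by rw [card_sdiff_of_subset hC's, hC'c]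
      have h1 := inc_small t ht P L H C' hno hH (hC's.trans hCL)
      have h2 := ih (C \ C') (by omega) (sdiff_subset.trans hCL)
      rw [← hK, hC'c] at h1
      rw [hc2, Nat.cast_sub hle.le, sub_div, div_self hg0.ne'] at h2
      rw [hsplit]
      push_cast
      linarith

/-- Sorting key of the dual line of `p` at abscissa `u`. -/
def key (u : ℝ) (p : ℝ × ℝ) : ℝ ×ₗ (ℝ ×ₗ ℝ) := toLex (p.2 - p.1 * u, toLex p)

theorem key_lt {u : ℝ} {p p' : ℝ × ℝ} : key u p' < key u p ↔
    p'.2 - p'.1 * u < p.2 - p.1 * u ∨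
      (p'.2 - p'.1 * u = p.2 - p.1 * u ∧ toLex p' < toLex p) := by
  unfold key
  rw [Prod.Lex.toLex_lt_toLex]

theorem key_inj {u : ℝ} {p p' : ℝ × ℝ} (h : key u p = key u p') : p = p' := by
  unfold key at h
  have := toLex.injective h
  rw [Prod.mk.injEq] at this
  exact toLex.injective this.2

def rank (P : Finset (ℝ × ℝ)) (u : ℝ) (p : ℝ × ℝ) : ℕ :=
  (P.filter fun p' => key u p' < key u p).card

def lrank (P : Finset (ℝ × ℝ)) (l : ℝ × ℝ) : ℕ :=
  (P.filter fun p => p.2 - p.1 * l.1 < l.2).card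

theorem rank_lt {P : Finset (ℝ × ℝ)} {u : ℝ} {p p' : ℝ × ℝ} (hp : p ∈ P)
    (h : key u p < key u p') : rank P u p < rank P u p' := by
  unfold rank
  apply card_lt_card
  rw [ssubset_iff_of_subset]
  · exact ⟨p, mem_filter.2 ⟨hp, h⟩, by simp⟩
  · intro x hx
    rw [mem_filter] at *
    exact ⟨hx.1, hx.2.trans h⟩

theorem rank_injOn (P : Finset (ℝ × ℝ)) (u : ℝ) : Set.InjOn (rank P u) P := by
  intro p hp p' hp' h
  rcases lt_trichotomy (key u p) (key u p') with h1 | h1 | h1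
  · exact absurd h (rank_lt hp h1).ne
  · exact key_inj h1
  · exact absurd h.symm (rank_lt hp' h1).ne

theorem rank_window {P : Finset (ℝ × ℝ)} {p l : ℝ × ℝ} (hp : p ∈ P) (h : PtOnLine p l) :
    lrank P l ≤ rank P l.1 p ∧ rank P l.1 p < lrank P l + deg P l := by
  have hv : p.2 - p.1 * l.1 = l.2 := by
    unfold PtOnLine at h
    rw [h]; ring
  constructor
  · apply card_le_card
    intro x hx
    rw [mem_filter] at *
    refine ⟨hx.1, ?_⟩
    rw [key_lt, hv]
    exact Or.inl hx.2
  · unfold rank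
    have hsub : (P.filter fun p' => key l.1 p' < key l.1 p) ⊆
        (P.filter fun p => p.2 - p.1 * l.1 < l.2) ∪ ((P.filter fun p => PtOnLine p l).erase p) := by
      intro x hx
      rw [mem_filter, key_lt, hv] at hx
      rw [mem_union, mem_filter, mem_erase, mem_filter]
      rcases hx with ⟨hxP, hx | ⟨hx, hx2⟩⟩
      · exact Or.inl ⟨hxP, hx⟩
      · refine Or.inr ⟨?_, hxP, ?_⟩
        · rintro rfl
          exact lt_irrefl _ hx2
        · unfold PtOnLine
          linarith
    have h1 := (card_le_card hsub).trans (card_union_le _ _)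
    have hmem : p ∈ P.filter fun p => PtOnLine p l := mem_filter.2 ⟨hp, h⟩
    rw [card_erase_of_mem hmem] at h1
    have hpos : 0 < (P.filter fun p => PtOnLine p l).card := card_pos.2 ⟨p, hmem⟩
    unfold lrank deg
    omega

theorem key_mono (p p' : ℝ × ℝ) :
    (∀ x y, x ≤ y → key x p' < key x p → key y p' < key y p) ∨
    (∀ x y, x ≤ y → key y p' < key y p → key x p' < key x p) := by
  simp only [key_lt]
  rcases le_total p.1 p'.1 with h | h
  · left
    intro x y hxy
    have hD : (p.1 - p'.1) * y ≤ (p.1 - p'.1) * x := by nlinarith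
    rintro (h1 | ⟨h1, h2⟩)
    · left; nlinarith
    · rcases lt_or_eq_of_le hD with h3 | h3
      · left; nlinarith
      · right; exact ⟨by linarith, h2⟩
  · right
    intro x y hxy
    have hD : (p.1 - p'.1) * x ≤ (p.1 - p'.1) * y := by nlinarith
    rintro (h1 | ⟨h1, h2⟩)
    · left; nlinarith
    · rcases lt_or_eq_of_le hD with h3 | h3
      · left; nlinarith
      · right; exact ⟨by linarith, h2⟩

theorem switch_le_one (u : ℕ → ℝ) (hu : Monotone u) (N : ℕ) (p p' : ℝ × ℝ) :
    ((range N).filter fun a => ¬ (key (u a) p' < key (u a) p ↔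
      key (u (a+1)) p' < key (u (a+1)) p)).card ≤ 1 := by
  have main : ∀ a b, a < b → ¬ (key (u a) p' < key (u a) p ↔ key (u (a+1)) p' < key (u (a+1)) p) →
      ¬ (key (u b) p' < key (u b) p ↔ key (u (b+1)) p' < key (u (b+1)) p) → False := by
    intro a b hab ha hb
    rcases key_mono p p' with hm | hm
    · have h1 := hm _ _ (hu (Nat.le_succ a))
      have h2 := hm _ _ (hu (show a + 1 ≤ b from hab))
      have h3 := hm _ _ (hu (Nat.le_succ b))
      simp only [Nat.succ_eq_add_one] at *
      tauto
    · have h1 := hm _ _ (hu (Nat.le_succ a))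
      have h2 := hm _ _ (hu (show a + 1 ≤ b from hab))
      have h3 := hm _ _ (hu (Nat.le_succ b))
      simp only [Nat.succ_eq_add_one] at *
      tauto
  rw [card_le_one]
  intro a ha b hb
  rw [mem_filter] at ha hb
  rcases lt_trichotomy a b with h | h | h
  · exact (main a b h ha.2 hb.2).elim
  · exact h
  · exact (main b a h hb.2 ha.2).elim

theorem level_pairs (q K r r' : ℕ) :
    ((range q ×ˢ range K).filter fun x => ¬ (r + x.1 < x.2 * q ↔ r' + x.1 < x.2 * q)).card ≤
      (r - r') + (r' - r) := by
  have : (r - r') + (r' - r) = (Ioc (min r r') (max r r')).card := by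
    rw [Nat.card_Ioc]; omega
  rw [this]
  apply card_le_card_of_injOn (fun x => x.2 * q - x.1)
  · rintro ⟨j, k⟩ hx
    rw [mem_coe, mem_filter] at hx
    have := hx.2
    rw [mem_coe, mem_Ioc]
    simp only at *
    generalize k * q = z at *
    omega
  · rintro ⟨j, k⟩ hx ⟨j', k'⟩ hy h
    rw [mem_coe, mem_filter, mem_product, mem_range] at hx hy
    simp only at hx hy h
    have hx2 := hx.2
    have hy2 := hy.2
    have hj := hx.1.1
    have hj' := hy.1.1
    rcases lt_trichotomy k k' with hk | hk | hk
    · have h3 : k * q + q ≤ k' * q := by nlinarith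
      omega
    · subst hk
      have : j = j' := by omega
      rw [this]
    · have h3 : k' * q + q ≤ k * q := by nlinarith
      omega

theorem rank_diff (P : Finset (ℝ × ℝ)) (x y : ℝ) (p : ℝ × ℝ) :
    (rank P x p - rank P y p) + (rank P y p - rank P x p) ≤
      (P.filter fun p' => ¬ (key x p' < key x p ↔ key y p' < key y p)).card := by
  have h1 := le_card_sdiff (P.filter fun p' => key y p' < key y p) (P.filter fun p' => key x p' < key x p)
  have h2 := le_card_sdiff (P.filter fun p' => key x p' < key x p) (P.filter fun p' => key y p' < key y p)
  have h3 : ((P.filter fun p' => key x p' < key x p) \ (P.filter fun p' => key y p' < key y p)).card ≤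
      (P.filter fun p' => ¬ (key x p' < key x p ↔ key y p' < key y p)).card := by
    apply card_le_card
    intro z hz
    simp only [mem_sdiff, mem_filter] at *
    tauto
  have h4 : ((P.filter fun p' => key y p' < key y p) \ (P.filter fun p' => key x p' < key x p)).card ≤
      (P.filter fun p' => ¬ (key x p' < key x p ↔ key y p' < key y p)).card := by
    apply card_le_card
    intro z hz
    simp only [mem_sdiff, mem_filter] at *
    tauto
  unfold rank
  omega

/-- Points whose dual lines cross level `k * q - j` between times `a` and `a + 1`. -/
def cross (P : Finset (ℝ × ℝ)) (u : ℕ → ℝ) (q j k a : ℕ) : Finset (ℝ × ℝ) :=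
  P.filter fun p => ¬ (rank P (u a) p + j < k * q ↔ rank P (u (a+1)) p + j < k * q)

theorem exists_offset (P : Finset (ℝ × ℝ)) (u : ℕ → ℝ) (hu : Monotone u) (N q K : ℕ) (hq : 1 ≤ q) :
    ∃ j < q, q * ∑ k ∈ range K, ∑ a ∈ range N, (cross P u q j k a).card ≤ P.card ^ 2 := by
  have total : ∑ j ∈ range q, ∑ k ∈ range K, ∑ a ∈ range N, (cross P u q j k a).card ≤ P.card ^ 2 := by
    calc _ = ∑ a ∈ range N, ∑ p ∈ P, ((range q ×ˢ range K).filter fun x =>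
          ¬ (rank P (u a) p + x.1 < x.2 * q ↔ rank P (u (a+1)) p + x.1 < x.2 * q)).card := by
          unfold cross
          simp only [card_filter]
          rw [← sum_product' (f := fun j k => ∑ a ∈ range N, ∑ p ∈ P,
            if ¬ (rank P (u a) p + j < k * q ↔ rank P (u (a+1)) p + j < k * q) then 1 else 0)]
          rw [sum_comm]
          apply sum_congr rfl
          intro a _
          rw [sum_comm]
      _ ≤ ∑ a ∈ range N, ∑ p ∈ P, (P.filter fun p' => ¬ (key (u a) p' < key (u a) p ↔
            key (u (a+1)) p' < key (u (a+1)) p)).card := by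
          apply sum_le_sum
          intro a _
          apply sum_le_sum
          intro p _
          exact (level_pairs _ _ _ _).trans (rank_diff _ _ _ _)
      _ = ∑ p ∈ P, ∑ p' ∈ P, ((range N).filter fun a => ¬ (key (u a) p' < key (u a) p ↔
            key (u (a+1)) p' < key (u (a+1)) p)).card := by
          simp only [card_filter]
          rw [sum_comm]
          apply sum_congr rfl
          intro p _
          rw [sum_comm]
      _ ≤ ∑ p ∈ P, ∑ p' ∈ P, 1 := by
          apply sum_le_sum
          intro p _
          apply sum_le_sum
          intro p' _
          exact switch_le_one u hu N p p'
      _ = _ := by simp [sq]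
  by_contra hcon
  push Not at hcon
  have h1 : ∑ j ∈ range q, P.card ^ 2 <
      ∑ j ∈ range q, q * ∑ k ∈ range K, ∑ a ∈ range N, (cross P u q j k a).card := by
    apply sum_lt_sum_of_nonempty ⟨0, mem_range.2 hq⟩
    intro j hj
    exact hcon j (mem_range.1 hj)
  rw [← mul_sum, sum_const, card_range, smul_eq_mul] at h1
  have := Nat.mul_le_mul_left q total
  omega

theorem exists_times (S : Finset ℝ) : ∃ (u : ℕ → ℝ) (N : ℕ), Monotone u ∧ ∀ x ∈ S, ∃ a ≤ N, u a = x := by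
  rcases S.eq_empty_or_nonempty with rfl | hS
  · exact ⟨fun _ => 0, 0, monotone_const, by simp⟩
  have hc : 0 < S.card := hS.card_pos
  refine ⟨fun a => S.orderEmbOfFin rfl ⟨min a (S.card - 1), by omega⟩, S.card, ?_, ?_⟩
  · intro a b hab
    apply (S.orderEmbOfFin rfl).monotone
    rw [Fin.mk_le_mk]
    omega
  · intro x hx
    have : x ∈ Set.range (S.orderEmbOfFin rfl) := by rw [range_orderEmbOfFin]; exact hx
    obtain ⟨i, hi⟩ := this
    refine ⟨i, i.2.le, ?_⟩
    rw [← hi]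
    have h2 : (⟨min i.1 (S.card - 1), by omega⟩ : Fin S.card) = i := by
      apply Fin.ext
      have := i.2
      change min i.1 (S.card - 1) = i.1
      omega
    change S.orderEmbOfFin rfl ⟨min i.1 (S.card - 1), _⟩ = _
    rw [h2]

theorem const_of_noswitch (A : ℕ → Prop) (a0 a : ℕ) (h : a0 ≤ a)
    (hA : ∀ i, a0 ≤ i → i < a → (A i ↔ A (i+1))) : A a0 ↔ A a := by
  induction a, h using Nat.le_induction with
  | base => rfl
  | succ n hn ih =>
    rw [ih (fun i h1 h2 => hA i h1 (by omega))]
    exact hA n hn (by omega)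

theorem sweep (P L : Finset (ℝ × ℝ)) (q : ℕ) (hq : 1 ≤ q) (hqm : q ≤ P.card) :
    ∃ (Lab : Finset (Σ _ : ℕ, ℕ)) (κ : ℝ × ℝ → Σ _ : ℕ, ℕ), q ^ 2 * Lab.card ≤ 5 * P.card ^ 2 ∧
      (∀ l ∈ L, κ l ∈ Lab) ∧
      ∀ lab, (P.filter fun p => ∃ l ∈ L, deg P l ≤ q ∧ κ l = lab ∧ PtOnLine p l).card ≤ 3 * q := by
  obtain ⟨u, N, hu, hN⟩ := exists_times (L.image Prod.fst)
  have hτ : ∀ l : ℝ × ℝ, ∃ a : ℕ, l ∈ L → a ≤ N ∧ u a = l.1 := by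
    intro l
    by_cases hl : l ∈ L
    · obtain ⟨a, ha⟩ := hN l.1 (mem_image_of_mem _ hl)
      exact ⟨a, fun _ => ha⟩
    · exact ⟨0, fun h => absurd h hl⟩
  choose τ hτ using hτ
  set m := P.card with hm
  set K' := m / q + 2 with hK'
  obtain ⟨j, hj, hoff⟩ := exists_offset P u hu N q (K' + 2) hq
  set e : ℕ → ℕ → ℕ := fun k a => (cross P u q j k a).card with he
  set W : ℕ → ℕ → ℕ := fun k a => ∑ i ∈ range a, (e k i + e (k+2) i) with hW
  have hWmono : ∀ k a b, a ≤ b → W k a ≤ W k b := by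
    intro k a b hab
    exact sum_le_sum_of_subset (range_mono hab)
  refine ⟨(range K').sigma fun k => range (W k N / q + 1),
    fun l => ⟨(lrank P l + j) / q, W ((lrank P l + j) / q) (τ l) / q⟩, ?_, ?_, ?_⟩
  · rw [card_sigma]
    simp only [card_range]
    rw [sum_add_distrib, mul_add]
    have h1 : q ^ 2 * ∑ k ∈ range K', 1 ≤ 3 * m ^ 2 := by
      simp only [sum_const, card_range, smul_eq_mul, mul_one]
      have : q * K' ≤ 3 * m := by
        rw [hK', mul_add]
        have := Nat.mul_div_le m q
        omega
      calc q ^ 2 * K' = q * (q * K') := by ring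
        _ ≤ m * (3 * m) := Nat.mul_le_mul hqm this
        _ = _ := by ring
    have h2 : q ^ 2 * ∑ k ∈ range K', W k N / q ≤ 2 * m ^ 2 := by
      have h3 : q * ∑ k ∈ range K', W k N / q ≤ ∑ k ∈ range K', W k N := by
        rw [mul_sum]
        exact sum_le_sum fun k _ => Nat.mul_div_le _ _
      have h4 : ∑ k ∈ range K', W k N ≤ 2 * ∑ k ∈ range (K' + 2), ∑ a ∈ range N, e k a := by
        simp only [hW, sum_add_distrib]
        have h5 : ∑ k ∈ range K', ∑ a ∈ range N, e k a ≤ ∑ k ∈ range (K' + 2), ∑ a ∈ range N, e k a :=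
          sum_le_sum_of_subset (range_mono (by omega))
        have h6 : ∑ k ∈ range K', ∑ a ∈ range N, e (k + 2) a ≤
            ∑ k ∈ range (K' + 2), ∑ a ∈ range N, e k a := by
          rw [sum_range_succ' _ (K' + 1), sum_range_succ' _ K']
          exact (Nat.le_add_right _ _).trans (Nat.le_add_right _ _)
        omega
      calc q ^ 2 * ∑ k ∈ range K', W k N / q = q * (q * ∑ k ∈ range K', W k N / q) := by ring
        _ ≤ q * (2 * ∑ k ∈ range (K' + 2), ∑ a ∈ range N, e k a) :=
            Nat.mul_le_mul_left _ (h3.trans h4)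
        _ = 2 * (q * ∑ k ∈ range (K' + 2), ∑ a ∈ range N, e k a) := by ring
        _ ≤ _ := Nat.mul_le_mul_left _ hoff
    omega
  · intro l hl
    rw [mem_sigma, mem_range, mem_range]
    constructor
    · have h1 : lrank P l ≤ m := card_filter_le _ _
      have h2 : (lrank P l + j) / q ≤ (m + q) / q := Nat.div_le_div_right (by omega)
      rw [Nat.add_div_right _ hq] at h2
      simp only
      omega
    · have := Nat.div_le_div_right (c := q) (hWmono ((lrank P l + j) / q) _ _ (hτ l hl).1)
      simp only
      omega
  · rintro ⟨k, v⟩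
    set Lc := L.filter fun l => deg P l ≤ q ∧
      (⟨(lrank P l + j) / q, W ((lrank P l + j) / q) (τ l) / q⟩ : Σ _ : ℕ, ℕ) = ⟨k, v⟩ with hLc
    have hLcm : ∀ l ∈ Lc, l ∈ L ∧ deg P l ≤ q ∧ (lrank P l + j) / q = k ∧ W k (τ l) / q = v := by
      intro l hl
      rw [hLc, mem_filter] at hl
      obtain ⟨h1, h2, h3⟩ := hl
      rw [Sigma.mk.injEq] at h3
      obtain ⟨h3, h4⟩ := h3
      rw [heq_eq_eq, h3] at h4
      exact ⟨h1, h2, h3, h4⟩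
    rcases Lc.eq_empty_or_nonempty with hemp | hne
    · have : (P.filter fun p => ∃ l ∈ L, deg P l ≤ q ∧
          (⟨(lrank P l + j) / q, W ((lrank P l + j) / q) (τ l) / q⟩ : Σ _ : ℕ, ℕ) = ⟨k, v⟩ ∧
          PtOnLine p l) = ∅ := by
        rw [filter_eq_empty_iff]
        rintro p _ ⟨l, hl, h1, h2, _⟩
        have : l ∈ Lc := mem_filter.2 ⟨hl, h1, h2⟩
        rw [hemp] at this
        simp at this
      rw [this]; simp
    obtain ⟨l0, hl0, hmin⟩ := exists_min_image Lc τ hne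
    obtain ⟨l1, hl1, hmax⟩ := exists_max_image Lc τ hne
    set S := P.filter fun p => ¬ (rank P (u (τ l0)) p + j < k * q) ∧
      rank P (u (τ l0)) p + j < (k + 2) * q with hS
    have hScard : S.card ≤ 2 * q := by
      have : (Ico (k * q) ((k + 2) * q)).card = 2 * q := by
        rw [Nat.card_Ico, ← Nat.sub_mul]; congr 1; omega
      rw [← this]
      apply card_le_card_of_injOn (fun p => rank P (u (τ l0)) p + j)
      · intro p hp
        rw [mem_coe, hS, mem_filter] at hp
        rw [mem_coe, mem_Ico]
        exact ⟨not_lt.1 hp.2.1, hp.2.2⟩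
      · intro p hp p' hp' h
        rw [mem_coe, hS, mem_filter] at hp hp'
        exact rank_injOn P _ hp.1 hp'.1 (Nat.add_right_cancel h)
    set D := (Ico (τ l0) (τ l1)).biUnion fun a => cross P u q j k a ∪ cross P u q j (k+2) a with hD
    have hDcard : D.card < q + 1 := by
      have h1 : D.card ≤ ∑ a ∈ Ico (τ l0) (τ l1), (e k a + e (k+2) a) := by
        refine card_biUnion_le.trans (sum_le_sum ?_)
        intro a _
        exact card_union_le _ _
      have h2 : W k (τ l0) + ∑ a ∈ Ico (τ l0) (τ l1), (e k a + e (k+2) a) = W k (τ l1) :=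
        sum_range_add_sum_Ico _ (hmax l0 hl0)
      have h3 := (hLcm l0 hl0).2.2.2
      have h4 := (hLcm l1 hl1).2.2.2
      have h5 := Nat.div_add_mod (W k (τ l0)) q
      have h6 := Nat.div_add_mod (W k (τ l1)) q
      have h7 := Nat.mod_lt (W k (τ l1)) hq
      rw [h3] at h5
      rw [h4] at h6
      omega
    have hsub : (P.filter fun p => ∃ l ∈ L, deg P l ≤ q ∧
          (⟨(lrank P l + j) / q, W ((lrank P l + j) / q) (τ l) / q⟩ : Σ _ : ℕ, ℕ) = ⟨k, v⟩ ∧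
          PtOnLine p l) ⊆ S ∪ D := by
      intro p hp
      rw [mem_filter] at hp
      obtain ⟨hpP, l, hlL, hl1', hl2', hpl⟩ := hp
      have hlc : l ∈ Lc := mem_filter.2 ⟨hlL, hl1', hl2'⟩
      obtain ⟨-, hdeg, hk, hv⟩ := hLcm l hlc
      by_contra hnot
      rw [mem_union, not_or] at hnot
      obtain ⟨hnS, hnD⟩ := hnot
      apply hnS
      have hno : ∀ i, τ l0 ≤ i → i < τ l → p ∉ cross P u q j k i ∧ p ∉ cross P u q j (k+2) i := by
        intro i h1 h2
        rw [← not_or, ← mem_union]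
        intro h3
        apply hnD
        rw [hD, mem_biUnion]
        exact ⟨i, mem_Ico.2 ⟨h1, h2.trans_le (hmax l hlc)⟩, h3⟩
      have c1 := const_of_noswitch (fun a => rank P (u a) p + j < k * q) (τ l0) (τ l) (hmin l hlc)
        (by
          intro i h1 h2
          by_contra h3
          exact (hno i h1 h2).1 (mem_filter.2 ⟨hpP, h3⟩))
      have c2 := const_of_noswitch (fun a => rank P (u a) p + j < (k+2) * q) (τ l0) (τ l) (hmin l hlc)
        (by
          intro i h1 h2
          by_contra h3
          exact (hno i h1 h2).2 (mem_filter.2 ⟨hpP, h3⟩))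
      rw [hS, mem_filter, c1, c2, (hτ l hlL).2]
      have hw := rank_window hpP hpl
      have h5 := Nat.div_add_mod (lrank P l + j) q
      have h7 := Nat.mod_lt (lrank P l + j) hq
      rw [hk, mul_comm] at h5
      have h8 : (k + 2) * q = k * q + 2 * q := by ring
      refine ⟨hpP, ?_, ?_⟩ <;> omega
    have := (card_le_card hsub).trans (card_union_le _ _)
    refine this.trans ?_
    omega

theorem main_bound (t : ℕ) (ht : 1 ≤ t) (P L : Finset (ℝ × ℝ)) (hno : NoGrid t P L)
    (K : ℝ) (hK : K = (t * (t * t + 1) : ℕ) + (t : ℝ)) (q g : ℕ) (hq : 1 ≤ q) (hqm : q ≤ P.card)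
    (hg : 1 ≤ g) :
    (inc P L : ℝ) ≤ (P.card : ℝ) ^ 2 / q + (5 * (P.card : ℝ) ^ 2 / (q : ℝ) ^ 2 + L.card / g) *
      (3 * q + K * (g : ℝ) ^ ((2 : ℝ) - 1 / t)) := by
  have hq0 : (0 : ℝ) < q := by exact_mod_cast hq
  have hg0 : (0 : ℝ) < g := by exact_mod_cast hg
  have hK0 : 0 ≤ K := by rw [hK]; positivity
  obtain ⟨Lab, κ, hLab, hκ, hhit⟩ := sweep P L q hq hqm
  set Light := L.filter fun l => ¬ q < deg P l with hLight
  set F : ℝ := 3 * q + K * (g : ℝ) ^ ((2 : ℝ) - 1 / t) with hF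
  have hF0 : 0 ≤ F := by positivity
  have hsplit : inc P L = ∑ l ∈ L.filter (fun l => q < deg P l), deg P l + ∑ l ∈ Light, deg P l := by
    rw [inc_eq_lines, hLight, sum_filter_add_sum_filter_not]
  have hheavy : ((∑ l ∈ L.filter (fun l => q < deg P l), deg P l : ℕ) : ℝ) ≤ (P.card : ℝ) ^ 2 / q := by
    rw [le_div_iff₀ hq0, mul_comm]
    exact_mod_cast heavy_bound P L q
  have hclass : ∀ lab ∈ Lab, ((∑ l ∈ Light.filter (fun l => κ l = lab), deg P l : ℕ) : ℝ) ≤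
      (1 + (Light.filter (fun l => κ l = lab)).card / g) * F := by
    intro lab _
    set C := Light.filter (fun l => κ l = lab) with hC
    set H := P.filter fun p => ∃ l ∈ L, deg P l ≤ q ∧ κ l = lab ∧ PtOnLine p l with hH
    have hCL : C ⊆ L := (filter_subset _ _).trans (filter_subset _ _)
    have heq : ∑ l ∈ C, deg P l = inc H C := by
      rw [inc_eq_lines]
      apply sum_congr rfl
      intro l hl
      unfold deg
      congr 1
      ext p
      rw [hC, mem_filter, hLight, mem_filter, not_lt] at hl
      rw [mem_filter, mem_filter, hH, mem_filter]
      constructor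
      · rintro ⟨h1, h2⟩
        exact ⟨⟨h1, l, hl.1.1, hl.1.2, hl.2, h2⟩, h2⟩
      · rintro ⟨⟨h1, _⟩, h2⟩
        exact ⟨h1, h2⟩
    rw [heq]
    refine (inc_chunk t ht P L H hno (filter_subset _ _) g hg K hK _ C le_rfl hCL).trans ?_
    have hHc : (H.card : ℝ) ≤ 3 * q := by exact_mod_cast hhit lab
    gcongr
    exact add_le_add hHc le_rfl
  have hlight : ((∑ l ∈ Light, deg P l : ℕ) : ℝ) ≤ (Lab.card + L.card / g) * F := by
    have hmaps : ∀ l ∈ Light, κ l ∈ Lab := fun l hl => hκ l (mem_filter.1 hl).1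
    rw [← sum_fiberwise_of_maps_to hmaps, Nat.cast_sum]
    refine (sum_le_sum hclass).trans ?_
    rw [← sum_mul, sum_add_distrib, ← sum_div, ← Nat.cast_sum, ← card_eq_sum_card_fiberwise hmaps]
    have : (Light.card : ℝ) ≤ L.card := by exact_mod_cast card_filter_le _ _
    simp only [sum_const, nsmul_eq_mul, mul_one]
    gcongr
  have hLab' : (Lab.card : ℝ) ≤ 5 * (P.card : ℝ) ^ 2 / (q : ℝ) ^ 2 := by
    rw [le_div_iff₀ (by positivity), mul_comm]
    exact_mod_cast hLab
  rw [hsplit, Nat.cast_add]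
  refine add_le_add hheavy (hlight.trans ?_)
  gcongr

set_option maxHeartbeats 1000000 in
theorem final_bound (t : ℕ) (ht : 1 < t) (K : ℝ) (hK : K = (t * (t * t + 1) : ℕ) + (t : ℝ))
    (P L : Finset (ℝ × ℝ)) (hno : NoGrid t P L) :
    (inc P L : ℝ) ≤ (37 + 24 * K) *
      ((P.card : ℝ) ^ ((2 * (t : ℝ) - 2) / (3 * (t : ℝ) - 2)) *
               (L.card : ℝ) ^ ((2 * (t : ℝ) - 1) / (3 * (t : ℝ) - 2)) +
             (P.card : ℝ) ^ ((1 : ℝ) + 1 / (6 * (t : ℝ) - 3)) + (L.card : ℝ)) := by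
  have hK0 : 0 ≤ K := by rw [hK]; positivity
  have ht2 : (2 : ℝ) ≤ t := by exact_mod_cast ht
  have h3t : (0 : ℝ) < 3 * t - 2 := by linarith
  have h6t : (0 : ℝ) < 6 * t - 3 := by linarith
  have h3ne : (3 * (t : ℝ) - 2) ≠ 0 := h3t.ne'
  have h3ne2 : ((t : ℝ) * 3 - 2) ≠ 0 := by rw [mul_comm]; exact h3ne
  have htne : (t : ℝ) ≠ 0 := by positivity
  have hc : 0 ≤ 37 + 24 * K := by linarith
  rcases P.eq_empty_or_nonempty with rfl | hP
  · have : inc ∅ L = 0 := by simp [inc]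
    rw [this, Nat.cast_zero]; positivity
  rcases L.eq_empty_or_nonempty with rfl | hL
  · have : inc P ∅ = 0 := by simp [inc]
    rw [this, Nat.cast_zero]; positivity
  have hm1 : 1 ≤ P.card := hP.card_pos
  have hn1 : 1 ≤ L.card := hL.card_pos
  have htriv : (inc P L : ℝ) ≤ L.card + (P.card : ℝ) ^ 2 := by exact_mod_cast inc_le_trivial P L
  have hmain := main_bound t ht.le P L hno K hK
  have hsmall := inc_small t ht.le P L P L hno subset_rfl subset_rfl
  rw [← hK] at hsmall
  have hmR : (1 : ℝ) ≤ P.card := by exact_mod_cast hm1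
  have hnR : (1 : ℝ) ≤ L.card := by exact_mod_cast hn1
  generalize (inc P L : ℝ) = I at *
  set X := (P.card : ℝ) ^ ((2 * (t : ℝ) - 2) / (3 * (t : ℝ) - 2)) *
               (L.card : ℝ) ^ ((2 * (t : ℝ) - 1) / (3 * (t : ℝ) - 2)) with hX
  set Y := (P.card : ℝ) ^ ((1 : ℝ) + 1 / (6 * (t : ℝ) - 3)) with hY
  have hX0 : 0 < X := by positivity
  have hY0 : 0 < Y := by positivity
  have hYm : (P.card : ℝ) ≤ Y := by
    conv_lhs => rw [← Real.rpow_one (P.card : ℝ)]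
    apply Real.rpow_le_rpow_of_exponent_le hmR
    have : 0 < 1 / (6 * (t : ℝ) - 3) := by positivity
    linarith
  generalize hmdef : P.card = M at *
  set m : ℝ := (M : ℝ) with hm
  generalize (L.card : ℝ) = n at *
  have hm0 : 0 < m := by linarith
  have hn0 : 0 < n := by linarith
  by_cases hbig : m ^ 2 ≤ n
  · have : I ≤ 2 * n := by linarith
    calc I ≤ 2 * n := this
      _ ≤ (37 + 24 * K) * n := mul_le_mul_of_nonneg_right (by linarith) hn0.le
      _ ≤ _ := mul_le_mul_of_nonneg_left (by linarith) hc
  push Not at hbig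
  set z := m ^ 2 / n with hz
  have hz1 : 1 ≤ z := by rw [hz, le_div_iff₀ hn0]; linarith
  have hz0 : 0 < z := by linarith
  set β := (2 * (t : ℝ) - 1) / (3 * (t : ℝ) - 2) with hβ
  set γ := (t : ℝ) / (3 * (t : ℝ) - 2) with hγ
  have hβ0 : 0 ≤ β := div_nonneg (by linarith) h3t.le
  have hγ0 : 0 ≤ γ := div_nonneg (by linarith) h3t.le
  set q := z ^ β with hqdef
  set g := z ^ γ with hgdef
  have hq1 : 1 ≤ q := Real.one_le_rpow hz1 hβ0
  have hg1 : 1 ≤ g := Real.one_le_rpow hz1 hγ0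
  have hqX : q * X = m ^ 2 := by
    have e1 : z ^ β * n ^ β = m ^ (2 * β) := by
      rw [← Real.mul_rpow hz0.le hn0.le, hz, div_mul_cancel₀ _ hn0.ne', Real.rpow_mul hm0.le]
      norm_num
    have e2 : 2 * β + (2 * (t : ℝ) - 2) / (3 * (t : ℝ) - 2) = 2 := by
      rw [hβ]; field_simp; ring
    calc q * X = (z ^ β * n ^ β) * m ^ ((2 * (t : ℝ) - 2) / (3 * (t : ℝ) - 2)) := by
          rw [hX, hqdef]; ring
      _ = m ^ (2 : ℝ) := by rw [e1, ← Real.rpow_add hm0, e2]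
      _ = m ^ 2 := by norm_num
  have hgz : g * z = q ^ 2 := by
    have e2 : γ + 1 = β * (2 : ℕ) := by
      rw [hβ, hγ]; push_cast; field_simp; ring
    calc g * z = z ^ (γ + 1) := by rw [Real.rpow_add hz0, Real.rpow_one]
      _ = q ^ 2 := by rw [e2, Real.rpow_mul_natCast hz0.le]
  have hgq : g ^ ((2 : ℝ) - 1 / t) = q := by
    rw [hgdef, ← Real.rpow_mul hz0.le, hqdef]
    congr 1
    rw [hβ, hγ]; field_simp
  have he0 : 0 ≤ (2 : ℝ) - 1 / t := by
    have : 1 / (t : ℝ) ≤ 1 := by rw [div_le_one (by positivity)]; linarith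
    linarith
  by_cases hqm : q ≤ m
  · have hQ1 : q ≤ (⌈q⌉₊ : ℝ) := Nat.le_ceil q
    have hQ2 : (⌈q⌉₊ : ℝ) ≤ 2 * q := by
      have := Nat.ceil_lt_add_one (show 0 ≤ q by linarith)
      linarith
    have hG1 : g ≤ (⌈g⌉₊ : ℝ) := Nat.le_ceil g
    have hG2 : (⌈g⌉₊ : ℝ) ≤ 2 * g := by
      have := Nat.ceil_lt_add_one (show 0 ≤ g by linarith)
      linarith
    have h := hmain ⌈q⌉₊ ⌈g⌉₊ (Nat.one_le_ceil_iff.2 (by linarith)) (Nat.ceil_le.2 hqm)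
      (Nat.one_le_ceil_iff.2 (by linarith))
    generalize (⌈q⌉₊ : ℝ) = Q at *
    generalize (⌈g⌉₊ : ℝ) = G at *
    have hq0 : 0 < q := by linarith
    have hg0 : 0 < g := by linarith
    have hQ0 : 0 < Q := by linarith
    have hG0 : 0 < G := by linarith
    have hGe : G ^ ((2 : ℝ) - 1 / t) ≤ 4 * q := by
      calc G ^ ((2 : ℝ) - 1 / t) ≤ (2 * g) ^ ((2 : ℝ) - 1 / t) :=
            Real.rpow_le_rpow (by linarith) hG2 he0
        _ = 2 ^ ((2 : ℝ) - 1 / t) * q := by rw [Real.mul_rpow (by norm_num) hg0.le, hgq]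
        _ ≤ 2 ^ (2 : ℝ) * q := by
            gcongr
            · norm_num
            · have : 0 < 1 / (t : ℝ) := by positivity
              linarith
        _ = 4 * q := by norm_num
    have hng : n / g = m ^ 2 / q ^ 2 := by
      rw [← hgz, hz]; field_simp
    have hXq : m ^ 2 / q = X := by rw [← hqX]; field_simp
    have : I ≤ m ^ 2 / q + (5 * m ^ 2 / q ^ 2 + n / g) * (3 * (2 * q) + K * (4 * q)) := by
      refine h.trans ?_
      gcongr
    rw [hng] at this
    have e : m ^ 2 / q + (5 * m ^ 2 / q ^ 2 + m ^ 2 / q ^ 2) * (3 * (2 * q) + K * (4 * q)) =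
        (37 + 24 * K) * (m ^ 2 / q) := by
      field_simp; ring
    rw [e, hXq] at this
    exact this.trans (mul_le_mul_of_nonneg_left (by linarith) hc)
  · push Not at hqm
    have hXm : X ≤ m := by
      by_contra hlt
      push Not at hlt
      have := mul_lt_mul'' hqm hlt hm0.le hm0.le
      rw [hqX, sq] at this
      exact lt_irrefl _ this
    have hnm : n ^ ((2 : ℝ) - 1 / t) ≤ m := by
      have e1 : n ^ β ≤ m ^ γ := by
        have e2 : m ^ ((2 * (t : ℝ) - 2) / (3 * (t : ℝ) - 2)) * m ^ γ = m := by
          rw [← Real.rpow_add hm0]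
          conv_rhs => rw [← Real.rpow_one m]
          congr 1
          rw [hγ]; field_simp; ring
        have e3 : m ^ ((2 * (t : ℝ) - 2) / (3 * (t : ℝ) - 2)) * n ^ β ≤
            m ^ ((2 * (t : ℝ) - 2) / (3 * (t : ℝ) - 2)) * m ^ γ := by rw [e2, ← hX]; exact hXm
        exact le_of_mul_le_mul_left e3 (by positivity)
      have hδ : 0 ≤ (3 * (t : ℝ) - 2) / t := by positivity
      have e4 := Real.rpow_le_rpow (by positivity) e1 hδ
      rw [← Real.rpow_mul hn0.le, ← Real.rpow_mul hm0.le] at e4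
      have e5 : β * ((3 * (t : ℝ) - 2) / t) = (2 : ℝ) - 1 / t := by
        rw [hβ]; field_simp
      have e6 : γ * ((3 * (t : ℝ) - 2) / t) = 1 := by
        rw [hγ]; field_simp
      rwa [e5, e6, Real.rpow_one] at e4
    have : I ≤ m + K * m := hsmall.trans (by gcongr)
    calc I ≤ m + K * m := this
      _ = (1 + K) * m := by ring
      _ ≤ (37 + 24 * K) * Y := mul_le_mul (by linarith) hYm hm0.le hc
      _ ≤ _ := mul_le_mul_of_nonneg_left (by linarith) hc

end GridProof

open scoped Classical in
/-- Theorem 1.3: for fixed `t > 1`, sets `L₁, L₂` of `t` lines whose `t²` pairwise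
red–blue intersection points form `P₀`, any `m` points and `n` lines containing no
subconfiguration isomorphic to `(P₀, L₁ ∪ L₂)` determine at most
`c (m^{(2t−2)/(3t−2)} n^{(2t−1)/(3t−2)} + m^{1+1/(6t−3)} + n)` incidences. -/
theorem stmt16 (t : ℕ) (ht : 1 < t) (L₁ L₂ : Finset (ℝ × ℝ))
    (h1 : L₁.card = t) (h2 : L₂.card = t) (hd : Disjoint L₁ L₂)
    (P₀ : Finset (ℝ × ℝ))
    (hP₀ : (↑P₀ : Set (ℝ × ℝ)) =
      {p : ℝ × ℝ | ∃ l₁ ∈ L₁, ∃ l₂ ∈ L₂, PtOnLine p l₁ ∧ PtOnLine p l₂})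
    (hcard : P₀.card = t ^ 2) :
    ∃ c : ℝ, 0 < c ∧ ∀ P L : Finset (ℝ × ℝ),
      ¬ ContainsConfig P L P₀ (L₁ ∪ L₂) →
      (((P ×ˢ L).filter fun q => PtOnLine q.1 q.2).card : ℝ) ≤
        c * ((P.card : ℝ) ^ ((2 * (t : ℝ) - 2) / (3 * (t : ℝ) - 2)) *
               (L.card : ℝ) ^ ((2 * (t : ℝ) - 1) / (3 * (t : ℝ) - 2)) +
             (P.card : ℝ) ^ ((1 : ℝ) + 1 / (6 * (t : ℝ) - 3)) + (L.card : ℝ)) := by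
  refine ⟨37 + 24 * ((t * (t * t + 1) : ℕ) + (t : ℝ)), by positivity, ?_⟩
  intro P L hno
  apply final_bound t ht _ rfl P L
  intro A B X hA hB hAL hBL hAB hX hinj
  exact hno (contains_of_grid t L₁ L₂ h1 h2 hd P₀ hP₀ hcard P L A B hA hB hAL hBL hAB X hX hinj)
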